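/- M · (M.map σ) = 2 · I₃, where M ∈ M₃(K) is the matrix with rows (α, 0, 0), (0, α, 0), ((σ(α)−α)t, 0, σ(α)), and I₃ is the 3×3 identity matrix. -/

import Mathlib

/-- Let `K` be a field of characteristic zero, let `α ∈ K`
satisfy `α² + α + 2 = 0`, let `σ : K → K` be a ring homomorphism with
`σ(α) = −1 − α`, and let `t ∈ K` satisfy `σ(t) = t`.  Then `M · (M.map σ) = 2·I₃`,
where `M` is the matrix with rows `(α, 0, 0)`, `(0, α, 0)`,
`((σ(α)−α)t, 0, σ(α))`. -/
theorem matrix_mul_map_eq_two_smul_one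
    {K : Type*} [Field K] [CharZero K] (α t : K) (σ : K →+* K)
    (hα : α^2 + α + 2 = 0) (hσ : σ α = -1 - α) (ht : σ t = t)
    (M : Matrix (Fin 3) (Fin 3) K)
    (hM : M = !![α, 0, 0; 0, α, 0; (σ α - α) * t, 0, σ α]) :
    M * M.map σ = (2 : K) • (1 : Matrix (Fin 3) (Fin 3) K) := by
  -- `σ` swaps the two roots `α` and `-1 - α` of `X² + X + 2`, whose product is `2`.
  have hσσ : σ (-1 - α) = α := by
    rw [map_sub, map_neg, map_one, hσ]
    ring
  have hprod : α * (-1 - α) = 2 := by linear_combination -hα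
  subst hM
  ext i j
  fin_cases i <;> fin_cases j <;>
    simp [Matrix.mul_apply, Fin.sum_univ_three, hσ, ht] <;>
    grind
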